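/- arXiv:2204.13005 — 6 statements merged into one kernel-verified Lean document; each statement's English description precedes it below -/
import Mathlib

section
/- (Weighted integral inequality for the oscillatory boundary term of the Robin problem.) Let s ≥ -1/2 and let γ be a nonzero real number. There exists a constant C = C(s,γ) > 0 such that for every measurable function G : ℝ² → ℂ, ∫_{k₁∈ℝ} ∫_{k₂=0}^∞ [(1+k₁²)^s + k₂^{2s}] · (k₂²/(k₂²+γ²)) · |G(k₁, -k₁²-k₂²)|² dk₂ dk₁ ≤ C ( ∫_{k₁∈ℝ} (1+k₁²)^s ∫_{τ=-∞}^{-k₁²} (1+(τ+k₁²)²)^{-1/4} |G(k₁,τ)|² dτ dk₁ + ∫_{k₁∈ℝ} ∫_{τ=-∞}^{-k₁²} (1+(τ+k₁²)²)^{(2s-1)/4} |G(k₁,τ)|² dτ dk₁ ), where both sides are interpreted in [0,∞]. -/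
open MeasureTheory Set
open scoped ENNReal NNReal

lemma robin_cov (a : ℝ) (g : ℝ → ℝ≥0∞) :
    ∫⁻ τ in Iio (-a^2), g τ = ∫⁻ k in Ioi (0:ℝ), ENNReal.ofReal (2*k) * g (-a^2 - k^2) := by
  have himg : (fun k : ℝ => -a^2 - k^2) '' Ioi 0 = Iio (-a^2) := by
    ext t
    simp only [mem_image, mem_Ioi, mem_Iio]
    constructor
    · rintro ⟨k, hk, rfl⟩
      have : 0 < k^2 := by positivity
      linarith
    · intro ht
      have h : 0 < -a^2 - t := by linarith
      refine ⟨Real.sqrt (-a^2 - t), Real.sqrt_pos.2 h, ?_⟩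
      rw [Real.sq_sqrt h.le]; ring
  rw [← himg, lintegral_image_eq_lintegral_deriv_mul_of_antitoneOn
    (f' := fun k => -(2*k)) measurableSet_Ioi]
  · simp
  · intro x _
    have := ((hasDerivAt_pow 2 x).const_sub (-a^2)).hasDerivWithinAt (s := Ioi 0)
    simpa using this
  · intro x hx y hy hxy
    simp only [mem_Ioi] at hx hy
    have : x^2 ≤ y^2 := by gcongr
    simp only
    linarith

lemma robin_pt (s γ : ℝ) (hs : -(1/2 : ℝ) ≤ s) (hγ : γ ≠ 0) (a k : ℝ) (ha : 0 ≤ a) (hk : 0 < k) :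
    (a + k ^ (2*s)) * (k^2 / (k^2 + γ^2)) ≤
      (2 + 1/γ^2) * (a * (2*k * (1 + (k^2)^2) ^ (-(1/4) : ℝ))
        + 2*k * (1 + (k^2)^2) ^ ((2*s - 1)/4)) := by
  have hg : 0 < γ^2 := by positivity
  have hD : 0 < k^2 + γ^2 := by positivity
  set B : ℝ := 1 + (k^2)^2 with hB
  have hB0 : 0 < B := by positivity
  have hC : 2*k^2 + 1 ≤ (2 + 1/γ^2) * (k^2 + γ^2) := by
    have : (2 + 1/γ^2) * (k^2 + γ^2) = 2*k^2 + 1 + 2*γ^2 + k^2/γ^2 := by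
      field_simp; ring
    have h2 : 0 ≤ k^2/γ^2 := by positivity
    rw [this]; linarith
  set C : ℝ := 2 + 1/γ^2 with hCdef
  have hC0 : 0 < C := by positivity
  have hq : B ^ (1/4 : ℝ) ≤ 1 + k := by
    have h1 : B ≤ (1+k)^(4:ℝ) := by
      have : (1+k)^(4:ℝ) = (1+k)^4 := by exact_mod_cast Real.rpow_natCast (1+k) 4
      rw [this, hB]
      nlinarith [pow_pos hk 2, pow_pos hk 3]
    calc B ^ (1/4 : ℝ) ≤ ((1+k)^(4:ℝ)) ^ (1/4 : ℝ) := by gcongr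
      _ = 1 + k := by
        rw [← Real.rpow_mul (by positivity)]; norm_num
  have hh : B ^ (1/2 : ℝ) ≤ 1 + k^2 := by
    rw [← Real.sqrt_eq_rpow, Real.sqrt_le_left (by positivity), hB]
    nlinarith [pow_pos hk 2]
  have h1 : k^2 / (k^2 + γ^2) ≤ C * (k * B ^ (-(1/4) : ℝ)) := by
    rw [div_le_iff₀ hD, Real.rpow_neg hB0.le]
    have hp : 0 < B ^ (1/4 : ℝ) := by positivity
    have : k * B ^ (1/4 : ℝ) ≤ C * (k^2 + γ^2) := by
      nlinarith [mul_le_mul_of_nonneg_left hq hk.le, sq_nonneg (k-1)]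
    calc k^2 = k * (k * B ^ (1/4 : ℝ)) * (B ^ (1/4 : ℝ))⁻¹ := by field_simp
      _ ≤ k * (C * (k^2 + γ^2)) * (B ^ (1/4 : ℝ))⁻¹ := by gcongr
      _ = _ := by ring
  have h2 : k ^ (2*s) * (k^2 / (k^2 + γ^2)) ≤ C * (k * B ^ ((2*s - 1)/4)) := by
    have e1 : k ^ (2*s) * k^2 = k * k ^ (2*s+1) := by
      rw [Real.rpow_add hk, Real.rpow_one]; ring
    have e2 : k ^ (2*s+1) ≤ B ^ ((2*s+1)/4) := by
      have : k ^ (2*s+1) = (k^(4:ℝ)) ^ ((2*s+1)/4) := by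
        rw [← Real.rpow_mul hk.le]; congr 1; ring
      rw [this]
      apply Real.rpow_le_rpow (by positivity)
      · have : k^(4:ℝ) = k^4 := by exact_mod_cast Real.rpow_natCast k 4
        rw [this, hB]; nlinarith
      · linarith
    have e3 : B ^ ((2*s+1)/4) = B ^ ((2*s - 1)/4) * B ^ (1/2 : ℝ) := by
      rw [← Real.rpow_add hB0]; congr 1; ring
    rw [← mul_div_assoc, div_le_iff₀ hD, e1]
    calc k * k ^ (2*s+1) ≤ k * (B ^ ((2*s - 1)/4) * B ^ (1/2 : ℝ)) := by rw [← e3]; gcongr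
      _ ≤ k * (B ^ ((2*s - 1)/4) * (C * (k^2 + γ^2))) := by
        gcongr
        nlinarith
      _ = _ := by ring
  have p1 : 0 < B ^ (-(1/4) : ℝ) := by positivity
  have p2 : 0 < B ^ ((2*s - 1)/4) := by positivity
  have h1' := mul_le_mul_of_nonneg_left h1 ha
  have q1 : 0 ≤ a * (C * (k * B ^ (-(1/4) : ℝ))) := by positivity
  have q2 : 0 ≤ C * (k * B ^ ((2*s - 1)/4)) := by positivity
  linarith

/-- Weighted integral inequality for the oscillatory boundary term of the Robin problem. -/
theorem robin_oscillatory_weighted_inequality (s γ : ℝ) (hs : -(1/2 : ℝ) ≤ s) (hγ : γ ≠ 0) :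
    ∃ C : ℝ, 0 < C ∧ ∀ G : ℝ × ℝ → ℂ, Measurable G →
      (∫⁻ k₁ : ℝ, ∫⁻ k₂ in Ioi (0:ℝ),
          ENNReal.ofReal (((1 + k₁^2) ^ s + k₂ ^ (2*s)) * (k₂^2 / (k₂^2 + γ^2)))
            * (‖G (k₁, -k₁^2 - k₂^2)‖₊ : ℝ≥0∞) ^ 2)
      ≤ ENNReal.ofReal C *
        ((∫⁻ k₁ : ℝ, ENNReal.ofReal ((1 + k₁^2) ^ s) *
            ∫⁻ τ in Iio (-k₁^2),
              ENNReal.ofReal ((1 + (τ + k₁^2)^2) ^ (-(1/4) : ℝ))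
                * (‖G (k₁, τ)‖₊ : ℝ≥0∞) ^ 2)
         + (∫⁻ k₁ : ℝ, ∫⁻ τ in Iio (-k₁^2),
              ENNReal.ofReal ((1 + (τ + k₁^2)^2) ^ ((2*s - 1)/4))
                * (‖G (k₁, τ)‖₊ : ℝ≥0∞) ^ 2)) := by
  have hC0 : 0 < 2 + 1/γ^2 := by positivity
  refine ⟨2 + 1/γ^2, hC0, fun G hG => ?_⟩
  have hsub : ∀ k₁ k₂ : ℝ, -k₁^2 - k₂^2 + k₁^2 = -k₂^2 := fun _ _ => by ring
  simp only [robin_cov, hsub, neg_sq]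
  have hGm : Measurable (fun p : ℝ × ℝ => (‖G (p.1, -p.1^2 - p.2^2)‖₊ : ℝ≥0∞) ^ 2) := by
    fun_prop
  have hF : ∀ r : ℝ, Measurable (fun p : ℝ × ℝ => ENNReal.ofReal (2*p.2) *
      (ENNReal.ofReal ((1 + (p.2^2)^2) ^ r) * (‖G (p.1, -p.1^2 - p.2^2)‖₊ : ℝ≥0∞) ^ 2)) := by
    intro r
    fun_prop
  have hF1 : ∀ r k₁ : ℝ, Measurable (fun k₂ : ℝ => ENNReal.ofReal (2*k₂) *
      (ENNReal.ofReal ((1 + (k₂^2)^2) ^ r) * (‖G (k₁, -k₁^2 - k₂^2)‖₊ : ℝ≥0∞) ^ 2)) :=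
    fun r k₁ => (hF r).comp measurable_prodMk_left
  have hI : ∀ r : ℝ, Measurable (fun k₁ : ℝ => ∫⁻ k₂ in Ioi (0:ℝ), ENNReal.ofReal (2*k₂) *
      (ENNReal.ofReal ((1 + (k₂^2)^2) ^ r) * (‖G (k₁, -k₁^2 - k₂^2)‖₊ : ℝ≥0∞) ^ 2)) :=
    fun r => (hF r).lintegral_prod_right'
  rw [← lintegral_add_right _ (hI _), ← lintegral_const_mul' _ _ ENNReal.ofReal_ne_top]
  refine lintegral_mono fun k₁ => ?_
  dsimp only
  rw [← lintegral_const_mul' _ _ ENNReal.ofReal_ne_top, ← lintegral_add_right _ (hF1 _ _),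
    ← lintegral_const_mul' _ _ ENNReal.ofReal_ne_top]
  refine setLIntegral_mono' measurableSet_Ioi fun k hk => ?_
  have hk0 : 0 < k := hk
  have ha : 0 ≤ (1 + k₁^2) ^ s := by positivity
  refine (mul_le_mul_left (ENNReal.ofReal_le_ofReal
    (robin_pt s γ hs hγ _ k ha hk0)) _).trans (le_of_eq ?_)
  generalize 2 + 1/γ^2 = C at hC0 ⊢
  rw [ENNReal.ofReal_mul hC0.le, ENNReal.ofReal_add (by positivity) (by positivity),
    ENNReal.ofReal_mul ha, ENNReal.ofReal_mul (by positivity : 0 ≤ 2*k),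
    ENNReal.ofReal_mul (by positivity : 0 ≤ 2*k)]
  ring
end

section
/- (Two-sided bound for the multiplier on the semicircle.) Let γ > 0, θ ∈ [-π/2, π/2], and set k₂ = iγ + (γ/2)e^{iθ} ∈ ℂ. Then (1 - e^{-2})/(1 + 9γ²/4) ≤ | (1 - e^{2(ik₂² - 1)}) / (1 - ik₂²) | ≤ (1 + e^{-2}) / (1 + γ⁴/16)^{1/2}. -/
open Complex

/-- Two-sided bound for the multiplier ψ̂(-k₂²) = (1-e^{2(ik₂²-1)})/(1-ik₂²) on the
semicircle k₂ = iγ + (γ/2)e^{iθ}, θ ∈ [-π/2, π/2], for γ > 0. -/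
theorem semicircle_multiplier_two_sided_bound (γ θ : ℝ) (hγ : 0 < γ)
    (hθ : θ ∈ Set.Icc (-(Real.pi/2)) (Real.pi/2))
    (k₂ : ℂ) (hk₂ : k₂ = Complex.I * (γ:ℂ) + ((γ:ℂ)/2) * Complex.exp (Complex.I * (θ:ℂ))) :
    (1 - Real.exp (-2)) / (1 + 9*γ^2/4)
        ≤ ‖(1 - Complex.exp (2 * (Complex.I * k₂^2 - 1))) / (1 - Complex.I * k₂^2)‖
      ∧ ‖(1 - Complex.exp (2 * (Complex.I * k₂^2 - 1))) / (1 - Complex.I * k₂^2)‖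
        ≤ (1 + Real.exp (-2)) / Real.sqrt (1 + γ^4/16) := by
  have hc : 0 ≤ Real.cos θ := Real.cos_nonneg_of_mem_Icc (by simpa using hθ)
  have hs1 := Real.neg_one_le_sin θ
  have hs2 := Real.sin_le_one θ
  have hcs := Real.sin_sq_add_cos_sq θ
  obtain ⟨x, hx⟩ : ∃ x : ℝ, x = γ/2 * Real.cos θ := ⟨_, rfl⟩
  obtain ⟨y, hy⟩ : ∃ y : ℝ, y = γ + γ/2 * Real.sin θ := ⟨_, rfl⟩
  have hx0 : 0 ≤ x := by rw [hx]; positivity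
  have hy0 : 0 ≤ y := by rw [hy]; nlinarith
  have hn : x^2 + y^2 = γ^2 * (5/4 + Real.sin θ) := by
    rw [hx, hy]; linear_combination γ^2/4 * hcs
  have hlo : γ^2/4 ≤ x^2 + y^2 := by rw [hn]; nlinarith [sq_nonneg γ]
  have hhi : x^2 + y^2 ≤ 9*γ^2/4 := by rw [hn]; nlinarith [sq_nonneg γ]
  have hk : k₂ = (x:ℂ) + (y:ℂ) * Complex.I := by
    rw [hk₂, mul_comm Complex.I (θ:ℂ), Complex.exp_mul_I, hx, hy]
    push_cast; ring
  have hxy : 0 ≤ x * y := mul_nonneg hx0 hy0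
  have hw : Complex.I * k₂^2 = ((-(2*(x*y)) : ℝ) : ℂ) + ((x^2-y^2 : ℝ) : ℂ) * Complex.I := by
    rw [hk]; push_cast
    linear_combination (2 * (x:ℂ) * y + (y:ℂ)^2 * Complex.I) * Complex.I_sq
  have hre : (Complex.I * k₂^2).re = -(2*(x*y)) := by
    rw [hw, Complex.add_re, Complex.re_ofReal_mul, Complex.ofReal_re, Complex.I_re]; ring
  have him : (Complex.I * k₂^2).im = x^2-y^2 := by
    rw [hw, Complex.add_im, Complex.im_ofReal_mul, Complex.ofReal_im, Complex.I_im]; ring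
  generalize Complex.I * k₂^2 = w at *
  have hden : ‖1 - w‖^2 = (1 + 2*(x*y))^2 + (x^2-y^2)^2 := by
    rw [Complex.sq_norm, Complex.normSq_apply, Complex.sub_re, Complex.sub_im, hre, him]
    simp only [Complex.one_re, Complex.one_im]; ring
  have hwn : ‖w‖ = x^2+y^2 := by
    have : ‖w‖^2 = (x^2+y^2)^2 := by
      rw [Complex.sq_norm, Complex.normSq_apply, hre, him]; ring
    exact (pow_left_inj₀ (norm_nonneg _) (by positivity) two_ne_zero).1 this
  have hup : ‖1 - w‖ ≤ 1 + 9*γ^2/4 := by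
    have := norm_sub_le (1:ℂ) w
    rw [norm_one, hwn] at this
    linarith
  have hdn : Real.sqrt (1 + γ^4/16) ≤ ‖1 - w‖ := by
    apply Real.sqrt_le_iff.2 ⟨norm_nonneg _, _⟩
    rw [hden]
    nlinarith [mul_le_mul hlo hlo (by positivity) (by positivity)]
  have hsp : 0 < Real.sqrt (1 + γ^4/16) := Real.sqrt_pos.2 (by positivity)
  have he : ‖Complex.exp (2 * (w - 1))‖ ≤ Real.exp (-2) := by
    rw [Complex.norm_exp]
    apply Real.exp_le_exp.2
    have : (2 * (w - 1)).re = 2 * (w.re - 1) := by simp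
    rw [this, hre]; linarith
  have hE : Real.exp (-2) ≤ 1 := Real.exp_le_one_iff.2 (by norm_num)
  have h1 := norm_sub_le (1:ℂ) (Complex.exp (2 * (w - 1)))
  have h2 := norm_sub_norm_le (1:ℂ) (Complex.exp (2 * (w - 1)))
  rw [norm_one] at h1 h2
  rw [norm_div]
  constructor
  · exact div_le_div₀ (norm_nonneg _) (by linarith) (by linarith) hup
  · exact div_le_div₀ (by positivity) (by linarith) hsp hdn
end

section
/- (Bounds on |1 - ik₂²| on the semicircle.) Let γ > 0 and θ ∈ [-π/2, π/2], and set k₂ = iγ + (γ/2)e^{iθ} ∈ ℂ. Then (1 + γ⁴/16)^{1/2} ≤ |1 - ik₂²| ≤ 1 + 9γ²/4. -/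
/-- Bounds on |1 - ik₂²| on the semicircle k₂ = iγ + (γ/2)e^{iθ},
θ ∈ [-π/2, π/2], for γ > 0. -/
theorem semicircle_denominator_bounds (γ θ : ℝ) (hγ : 0 < γ)
    (hθ : θ ∈ Set.Icc (-(Real.pi/2)) (Real.pi/2))
    (k₂ : ℂ) (hk₂ : k₂ = Complex.I * (γ:ℂ) + ((γ:ℂ)/2) * Complex.exp (Complex.I * (θ:ℂ))) :
    Real.sqrt (1 + γ^4/16) ≤ ‖1 - Complex.I * k₂^2‖
      ∧ ‖1 - Complex.I * k₂^2‖ ≤ 1 + 9*γ^2/4 := by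
  have hc : 0 ≤ Real.cos θ := Real.cos_nonneg_of_mem_Icc ⟨by linarith [hθ.1], hθ.2⟩
  have hs1 := Real.neg_one_le_sin θ
  have hs2 := Real.sin_le_one θ
  have hcs := Real.sin_sq_add_cos_sq θ
  obtain ⟨a, ha⟩ : ∃ a, a = γ / 2 * Real.cos θ := ⟨_, rfl⟩
  obtain ⟨b, hb⟩ : ∃ b, b = γ + γ / 2 * Real.sin θ := ⟨_, rfl⟩
  have hk : k₂ = (a : ℂ) + (b : ℂ) * Complex.I := by
    rw [hk₂, mul_comm Complex.I (θ:ℂ), Complex.exp_mul_I, ha, hb]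
    push_cast
    ring
  have ha0 : 0 ≤ a := by rw [ha]; positivity
  have hb0 : 0 ≤ b := by rw [hb]; nlinarith
  have hab : 0 ≤ a * b := mul_nonneg ha0 hb0
  have hr : a^2 + b^2 = γ^2 * (5/4 + Real.sin θ) := by
    rw [ha, hb]; linear_combination γ^2/4 * hcs
  have hlo : γ^2/4 ≤ a^2 + b^2 := by rw [hr]; nlinarith [sq_nonneg γ]
  have hhi : a^2 + b^2 ≤ 9*γ^2/4 := by rw [hr]; nlinarith [sq_nonneg γ]
  have hn : ‖1 - Complex.I * k₂^2‖ = Real.sqrt (1 + 4*(a*b) + (a^2+b^2)^2) := by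
    have h1 : 1 - Complex.I * k₂^2
        = ((1 + 2*a*b : ℝ) : ℂ) + ((b^2 - a^2 : ℝ) : ℂ) * Complex.I := by
      rw [hk]; push_cast
      linear_combination (-2*(a:ℂ)*b - b^2*Complex.I) * Complex.I_sq
    rw [h1, Complex.norm_add_mul_I]
    congr 1; ring
  have hg : 0 ≤ γ^2/4 := by positivity
  rw [hn]
  constructor
  · apply Real.sqrt_le_sqrt
    nlinarith
  · apply Real.sqrt_le_iff.mpr
    refine ⟨by positivity, ?_⟩
    nlinarith [sq_nonneg (a-b)]
end

section
/- (Kernel bound on the semicircle.) Let γ > 0 and β ∈ (0,1). There exists a constant C = C(γ,β) > 0 such that for every k₁ ∈ ℝ and every θ ∈ [-π/2, π/2], with k₂ = iγ + (γ/2)e^{iθ} ∈ ℂ, ∫_{z₁∈ℝ} ∫_{z₂=0}^∞ |e^{i k₁ z₁ + i k₂ z₂} - 1|² / (z₁² + z₂²)^{1+β} dz₂ dz₁ ≤ C · max{1, |k₁|^{2β}}. -/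
open MeasureTheory Set
open scoped ENNReal NNReal

lemma sk_radial (β A : ℝ) (hβ : β ∈ Set.Ioo (0:ℝ) 1) (hA : 0 < A) :
    (∫⁻ r in Ioi (0:ℝ), ENNReal.ofReal (r * (4 * min 1 (A^2 * r^2) / (r^2) ^ (1+β))))
      ≤ ENNReal.ofReal (4 * A^(2*β) * (1/(2-2*β) + 1/(2*β))) := by
  obtain ⟨h0, h1⟩ := hβ
  have hA' : 0 < A⁻¹ := inv_pos.mpr hA
  have e : ∀ r : ℝ, 0 < r → (r^2) ^ (1+β) = r ^ (2+2*β) := by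
    intro r hr
    rw [← Real.rpow_natCast, ← Real.rpow_mul hr.le]; congr 1; push_cast; ring
  have hsplit : Ioi (0:ℝ) = Ioc 0 A⁻¹ ∪ Ioi A⁻¹ := (Ioc_union_Ioi_eq_Ioi hA'.le).symm
  rw [hsplit]
  refine (lintegral_union_le _ _ _).trans ?_
  have i1 : IntegrableOn (fun r : ℝ => 4 * A^2 * r ^ (1-2*β)) (Ioc 0 A⁻¹) := by
    apply Integrable.const_mul
    have := intervalIntegral.intervalIntegrable_rpow' (a := 0) (b := A⁻¹) (r := 1-2*β) (by linarith)
    exact (intervalIntegrable_iff_integrableOn_Ioc_of_le hA'.le).mp this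
  have i2 : IntegrableOn (fun r : ℝ => 4 * r ^ (-1-2*β)) (Ioi A⁻¹) := by
    apply Integrable.const_mul
    exact integrableOn_Ioi_rpow_of_lt (by linarith) hA'
  have b1 : (∫⁻ r in Ioc (0:ℝ) A⁻¹, ENNReal.ofReal (r * (4 * min 1 (A^2 * r^2) / (r^2) ^ (1+β))))
      ≤ ENNReal.ofReal (4 * A^(2*β) * (1/(2-2*β))) := by
    calc _ ≤ ∫⁻ r in Ioc (0:ℝ) A⁻¹, ENNReal.ofReal (4 * A^2 * r ^ (1-2*β)) := by
          refine setLIntegral_mono' measurableSet_Ioc fun r hr => ENNReal.ofReal_le_ofReal ?_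
          have hr0 := hr.1
          rw [e r hr0]
          have : r ^ (1-2*β) = r * (r^2 / r^(2+2*β)) := by
            rw [← Real.rpow_natCast r 2, ← Real.rpow_sub hr0, mul_comm r, ← Real.rpow_add_one hr0.ne']
            congr 1; push_cast; ring
          rw [this]
          have hp : 0 < r^(2+2*β) := Real.rpow_pos_of_pos hr0 _
          have : 4 * A^2 * (r * (r^2 / r^(2+2*β))) = r * (4 * (A^2 * r^2) / r^(2+2*β)) := by ring
          rw [this]
          gcongr
          exact min_le_right _ _
      _ = ENNReal.ofReal (∫ r in Ioc (0:ℝ) A⁻¹, 4 * A^2 * r ^ (1-2*β)) := by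
          rw [ofReal_integral_eq_lintegral_ofReal i1]
          filter_upwards [ae_restrict_mem measurableSet_Ioc] with r hr
          have := Real.rpow_nonneg hr.1.le (1-2*β)
          show (0:ℝ) ≤ _
          positivity
      _ = _ := by
          congr 1
          rw [integral_const_mul, ← intervalIntegral.integral_of_le hA'.le, integral_rpow (Or.inl (by linarith)),
            Real.zero_rpow (by linarith), Real.inv_rpow hA.le, ← Real.rpow_neg hA.le]
          have : A^(2*β) = A^2 * A^(-(1-2*β+1)) := by
            rw [← Real.rpow_natCast A 2, ← Real.rpow_add hA]
            congr 1; push_cast; ring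
          rw [this, show 1 - 2*β+1 = 2-2*β by ring]; ring
  have b2 : (∫⁻ r in Ioi A⁻¹, ENNReal.ofReal (r * (4 * min 1 (A^2 * r^2) / (r^2) ^ (1+β))))
      ≤ ENNReal.ofReal (4 * A^(2*β) * (1/(2*β))) := by
    calc _ ≤ ∫⁻ r in Ioi A⁻¹, ENNReal.ofReal (4 * r ^ (-1-2*β)) := by
          refine setLIntegral_mono' measurableSet_Ioi fun r hr => ENNReal.ofReal_le_ofReal ?_
          have hr0 : 0 < r := hA'.trans hr
          rw [e r hr0]
          have : r ^ (-1-2*β) = r * (1 / r^(2+2*β)) := by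
            rw [one_div, ← Real.rpow_neg hr0.le, mul_comm r, ← Real.rpow_add_one hr0.ne']
            congr 1; ring
          rw [this]
          have hp : 0 < r^(2+2*β) := Real.rpow_pos_of_pos hr0 _
          have : 4 * (r * (1 / r^(2+2*β))) = r * (4 * 1 / r^(2+2*β)) := by ring
          rw [this]
          gcongr
          exact min_le_left _ _
      _ = ENNReal.ofReal (∫ r in Ioi A⁻¹, 4 * r ^ (-1-2*β)) := by
          rw [ofReal_integral_eq_lintegral_ofReal i2]
          filter_upwards [ae_restrict_mem measurableSet_Ioi] with r hr
          have := Real.rpow_nonneg (hA'.trans hr).le (-1-2*β)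
          show (0:ℝ) ≤ _
          positivity
      _ = _ := by
          congr 1
          rw [integral_const_mul, integral_Ioi_rpow_of_lt (by linarith) hA',
            Real.inv_rpow hA.le, ← Real.rpow_neg hA.le, show -(-1-2*β+1) = 2*β by ring,
            show -1-2*β+1 = -(2*β) by ring]
          field_simp
  refine (add_le_add b1 b2).trans ?_
  have := Real.rpow_nonneg hA.le (2*β)
  rw [← ENNReal.ofReal_add, ← mul_add]
  · have : 0 < 2-2*β := by linarith
    positivity
  · positivity

lemma sk_plane (β A : ℝ) (hβ : β ∈ Set.Ioo (0:ℝ) 1) (hA : 0 < A) :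
    (∫⁻ z₁ : ℝ, ∫⁻ z₂ : ℝ,
        ENNReal.ofReal (4 * min 1 (A^2 * (z₁^2+z₂^2)) / (z₁^2+z₂^2) ^ (1+β)))
      ≤ ENNReal.ofReal (4 * A^(2*β) * (1/(2-2*β) + 1/(2*β)) * (2 * Real.pi)) := by
  have hm : Measurable (fun p : ℝ × ℝ =>
      ENNReal.ofReal (4 * min 1 (A^2 * (p.1^2+p.2^2)) / (p.1^2+p.2^2) ^ (1+β))) := by
    fun_prop
  rw [← lintegral_prod (μ := volume) (ν := volume) _ hm.aemeasurable, ← Measure.volume_eq_prod,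
    ← lintegral_comp_polarCoord_symm]
  have ht : MeasurableSet polarCoord.target := polarCoord.open_target.measurableSet
  calc _ = ∫⁻ p in polarCoord.target,
        ENNReal.ofReal (p.1 * (4 * min 1 (A^2 * p.1^2) / (p.1^2) ^ (1+β))) := by
        refine setLIntegral_congr_fun ht fun p hp => ?_
        have hp0 : 0 < p.1 := hp.1
        have : (p.1 * Real.cos p.2)^2 + (p.1 * Real.sin p.2)^2 = p.1^2 := by
          nlinarith [Real.sin_sq_add_cos_sq p.2]
        simp only [polarCoord_symm_apply, this, smul_eq_mul]
        rw [ENNReal.ofReal_mul hp0.le]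
    _ = (∫⁻ r in Ioi (0:ℝ), ENNReal.ofReal (r * (4 * min 1 (A^2 * r^2) / (r^2) ^ (1+β))))
          * ENNReal.ofReal (2 * Real.pi) := by
        rw [polarCoord_target, Measure.volume_eq_prod, ← Measure.prod_restrict, lintegral_prod]
        · simp only [lintegral_const, Measure.restrict_apply_univ, Real.volume_Ioo]
          rw [lintegral_mul_const]
          · congr 2; ring
          · fun_prop
        · fun_prop
    _ ≤ _ := by
        rw [ENNReal.ofReal_mul' (q := 2 * Real.pi) (by positivity)]
        exact mul_le_mul_left (sk_radial β A hβ hA) _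

lemma sk_exp (w : ℂ) (hw : w.re ≤ 0) (B : ℝ) (hB : ‖w‖^2 ≤ B) :
    ‖Complex.exp w - 1‖^2 ≤ 4 * min 1 B := by
  have h2 : ‖Complex.exp w - 1‖ ≤ 2 := by
    refine (norm_sub_le _ _).trans ?_
    rw [Complex.norm_exp, norm_one]
    linarith [Real.exp_le_one_iff.mpr hw]
  have hn := norm_nonneg (Complex.exp w - 1)
  rcases le_total ‖w‖ 1 with h | h
  · have := Complex.norm_exp_sub_one_le h
    rcases min_cases 1 B with ⟨h', _⟩ | ⟨h', _⟩ <;> rw [h'] <;> nlinarith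
  · rw [min_eq_left (by nlinarith)]; nlinarith

/-- Kernel bound on the semicircle: the Gagliardo-type kernel integral with
k₂ = iγ + (γ/2)e^{iθ} on the right semicircle is bounded by C·max{1, |k₁|^{2β}}. -/
theorem semicircle_kernel_bound (γ β : ℝ) (hγ : 0 < γ) (hβ : β ∈ Set.Ioo (0:ℝ) 1) :
    ∃ C : ℝ, 0 < C ∧ ∀ (k₁ θ : ℝ), θ ∈ Set.Icc (-(Real.pi/2)) (Real.pi/2) →
      (∫⁻ z₁ : ℝ, ∫⁻ z₂ in Ioi (0:ℝ),
          ENNReal.ofReal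
            (‖Complex.exp (Complex.I * (k₁:ℂ) * (z₁:ℂ)
                + Complex.I
                  * (Complex.I * (γ:ℂ) + ((γ:ℂ)/2) * Complex.exp (Complex.I * (θ:ℂ)))
                  * (z₂:ℂ)) - 1‖ ^ 2
              / (z₁^2 + z₂^2) ^ (1 + β)))
        ≤ ENNReal.ofReal (C * max 1 (|k₁| ^ (2*β))) := by
  have hβ' := hβ
  obtain ⟨h0, h1⟩ := hβ'
  have h3 : 0 < 2 - 2*β := by linarith
  set M : ℝ := 1 + 3*γ/2 with hM
  have hMpos : 0 < M := by positivity
  refine ⟨4 * M^(2*β) * (1/(2-2*β) + 1/(2*β)) * (2 * Real.pi), by positivity, ?_⟩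
  intro k₁ θ _
  set K : ℝ := max 1 |k₁| with hK
  have hK1 : 1 ≤ K := le_max_left _ _
  have hKk : |k₁| ≤ K := le_max_right _ _
  have hKpos : 0 < K := by linarith
  have hKp : K^(2*β) ≤ max 1 (|k₁|^(2*β)) := by
    rcases max_cases 1 |k₁| with ⟨h, _⟩ | ⟨h, _⟩
    · rw [hK, h, Real.one_rpow]; exact le_max_left _ _
    · rw [hK, h]; exact le_max_right _ _
  calc _ ≤ ∫⁻ z₁ : ℝ, ∫⁻ z₂ : ℝ,
        ENNReal.ofReal (4 * min 1 ((K*M)^2 * (z₁^2+z₂^2)) / (z₁^2+z₂^2) ^ (1+β)) := by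
        refine lintegral_mono fun z₁ => ?_
        refine le_trans ?_ (setLIntegral_le_lintegral (Ioi 0) _)
        refine setLIntegral_mono' measurableSet_Ioi fun z₂ hz => ENNReal.ofReal_le_ofReal ?_
        have hz0 : 0 < z₂ := hz
        gcongr
        have hw : Complex.I * (k₁:ℂ) * (z₁:ℂ)
                + Complex.I
                  * (Complex.I * (γ:ℂ) + ((γ:ℂ)/2) * Complex.exp (Complex.I * (θ:ℂ)))
                  * (z₂:ℂ) = ⟨-(γ + γ/2 * Real.sin θ) * z₂, k₁ * z₁ + γ/2 * Real.cos θ * z₂⟩ := by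
          rw [mul_comm Complex.I (θ:ℂ), Complex.exp_mul_I, ← Complex.ofReal_cos, ← Complex.ofReal_sin]
          have : (γ:ℂ)/2 = ((γ/2 : ℝ) : ℂ) := by push_cast; rfl
          rw [this]
          apply Complex.ext <;>
          simp only [Complex.add_re, Complex.mul_re, Complex.add_im, Complex.mul_im, Complex.I_re, Complex.I_im, Complex.ofReal_re, Complex.ofReal_im] <;> ring
        have hs := Real.neg_one_le_sin θ
        have hs' := Real.sin_le_one θ
        rw [hw]
        apply sk_exp
        · have : 0 ≤ γ + γ/2 * Real.sin θ := by nlinarith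
          show -(γ + γ/2 * Real.sin θ) * z₂ ≤ 0
          nlinarith
        · rw [Complex.sq_norm, Complex.normSq_mk]
          have hc := Real.sin_sq_add_cos_sq θ
          have hcs : Real.cos θ ≤ 1 := Real.cos_le_one θ
          have hcs' : -1 ≤ Real.cos θ := Real.neg_one_le_cos θ
          obtain ⟨a, hadef⟩ : ∃ a, a = |k₁| * |z₁| := ⟨_, rfl⟩
          have ha : 0 ≤ a := by rw [hadef]; positivity
          have hk2 : k₁^2 ≤ K^2 := by rw [← sq_abs]; gcongr
          have haa : (k₁*z₁)^2 = a^2 := by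
            rw [hadef, ← abs_mul, sq_abs]
          have hak : k₁*z₁ ≤ a := by rw [hadef, ← abs_mul]; exact le_abs_self _
          have hak' : -a ≤ k₁*z₁ := by rw [hadef, ← abs_mul]; exact neg_abs_le _
          have s1 : -(γ + γ/2 * Real.sin θ) * z₂ * (-(γ + γ/2 * Real.sin θ) * z₂) +
              (k₁ * z₁ + γ/2 * Real.cos θ * z₂) * (k₁ * z₁ + γ/2 * Real.cos θ * z₂)
              ≤ (a + 3*γ/2*z₂)^2 := by
            have e1 : γ^2*z₂^2*(1+Real.sin θ + (Real.sin θ^2 + Real.cos θ^2)/4) ≤ 9/4*γ^2*z₂^2 := by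
              rw [hc]
              have : 0 ≤ γ^2*z₂^2 := by positivity
              nlinarith
            have e2 : (k₁*z₁)*Real.cos θ ≤ a := by
              calc _ ≤ |(k₁*z₁)*Real.cos θ| := le_abs_self _
                _ = a * |Real.cos θ| := by rw [abs_mul, abs_mul, hadef]
                _ ≤ a * 1 := by gcongr; exact Real.abs_cos_le_one θ
                _ = a := mul_one a
            have e3 : γ*z₂*((k₁*z₁)*Real.cos θ) ≤ γ*z₂*a := by gcongr
            have e4 : 0 ≤ γ*z₂*a := by positivity
            nlinarith
          have s2 : (a + 3*γ/2*z₂)^2 ≤ (k₁^2 + (3*γ/2)^2) * (z₁^2+z₂^2) := by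
            have : (k₁^2 + (3*γ/2)^2) * (z₁^2+z₂^2) - (a + 3*γ/2*z₂)^2
                = (|k₁| * z₂ - 3*γ/2 * |z₁|)^2 := by
              rw [← sq_abs k₁, ← sq_abs z₁, hadef]; ring
            nlinarith [sq_nonneg (|k₁| * z₂ - 3*γ/2 * |z₁|)]
          have s3 : k₁^2 + (3*γ/2)^2 ≤ (K*M)^2 := by
            have : (K*M)^2 = K^2 + K^2 * (3*γ) + K^2*(3*γ/2)^2 := by rw [hM]; ring
            have hK2 : 1 ≤ K^2 := by nlinarith
            have : 0 ≤ K^2 * (3*γ) := by positivity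
            nlinarith [sq_nonneg (3*γ/2)]
          exact s1.trans (s2.trans (by gcongr))
    _ ≤ ENNReal.ofReal (4 * (K*M)^(2*β) * (1/(2-2*β) + 1/(2*β)) * (2 * Real.pi)) :=
        sk_plane β (K*M) hβ (by positivity)
    _ ≤ _ := by
        apply ENNReal.ofReal_le_ofReal
        rw [Real.mul_rpow hKpos.le hMpos.le]
        have : 4 * (K^(2*β) * M^(2*β)) * (1/(2-2*β) + 1/(2*β)) * (2 * Real.pi)
          = 4 * M^(2*β) * (1/(2-2*β) + 1/(2*β)) * (2 * Real.pi) * K^(2*β) := by ring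
        rw [this]
        gcongr
end

section
/- (Kernel bound for the fractional seminorm.) Let β ∈ (0,1). There exists a constant C = C(β) > 0 such that for every k₁ ∈ ℝ and every k₂ > 0, ∫_{z₁∈ℝ} ∫_{z₂=0}^∞ |e^{i k₁ z₁ - k₂ z₂} - 1|² / (z₁² + z₂²)^{1+β} dz₂ dz₁ ≤ C (k₁² + k₂²)^β. -/
open MeasureTheory Set
open scoped ENNReal NNReal

lemma aux_norm (w : ℂ) (hw : w.re ≤ 0) : ‖Complex.exp w - 1‖ ≤ ‖w‖ := by
  have hc : Convex ℝ {z : ℂ | z.re ≤ 0} := convex_halfSpace_re_le 0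
  have := hc.norm_image_sub_le_of_norm_hasDerivWithin_le (f := Complex.exp) (f' := Complex.exp)
    (C := 1) (x := 0) (y := w)
    (fun x _ => (Complex.hasDerivAt_exp x).hasDerivWithinAt)
    (fun x hx => by rw [Complex.norm_exp]; exact Real.exp_le_one_iff.2 hx) (by simp) hw
  simpa using this

lemma aux_norm2 (w : ℂ) (hw : w.re ≤ 0) : ‖Complex.exp w - 1‖ ≤ 2 := by
  have h1 : ‖Complex.exp w‖ ≤ 1 := by rw [Complex.norm_exp]; exact Real.exp_le_one_iff.2 hw
  have := norm_sub_le (Complex.exp w) 1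
  simp at this
  linarith

noncomputable def auxG (β L t : ℝ) : ℝ :=
  if t ≤ 1 / L then L * t ^ (-β) else 4 * t ^ (-(1 + β))

lemma auxG_meas (β L : ℝ) : Measurable (auxG β L) := by
  unfold auxG
  refine Measurable.ite measurableSet_Iic ?_ ?_
  · fun_prop
  · fun_prop

lemma aux_pt (β k₁ k₂ z₁ z₂ : ℝ) (hβ : 0 < β) (hk : 0 < k₂) (hz : 0 < z₂) :
    ‖Complex.exp (Complex.I * (k₁:ℂ) * (z₁:ℂ) - (k₂:ℂ) * (z₂:ℂ)) - 1‖ ^ 2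
              / (z₁^2 + z₂^2) ^ (1 + β) ≤ auxG β (k₁^2 + k₂^2) (z₁^2+z₂^2) := by
  set w := Complex.I * (k₁:ℂ) * (z₁:ℂ) - (k₂:ℂ) * (z₂:ℂ) with hwd
  have hre : w.re = - (k₂ * z₂) := by simp [hwd]
  have him : w.im = k₁ * z₁ := by simp [hwd]
  have hw : w.re ≤ 0 := by rw [hre]; have := mul_pos hk hz; linarith
  have ht : 0 < z₁^2 + z₂^2 := by positivity
  have hn : ‖w‖^2 ≤ (k₁^2 + k₂^2) * (z₁^2+z₂^2) := by
    rw [← Complex.normSq_eq_norm_sq, Complex.normSq_apply, hre, him]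
    nlinarith [sq_nonneg (k₁ * z₂), sq_nonneg (k₂ * z₁)]
  have h1 := aux_norm w hw
  have h2 := aux_norm2 w hw
  unfold auxG
  split_ifs
  · rw [div_le_iff₀ (by positivity), mul_assoc, ← Real.rpow_add ht]
    rw [show -β + (1 + β) = 1 by ring, Real.rpow_one]
    exact le_trans (pow_le_pow_left₀ (norm_nonneg _) h1 2) hn
  · rw [div_le_iff₀ (by positivity), mul_assoc, ← Real.rpow_add ht]
    rw [show -(1+β) + (1 + β) = 0 by ring, Real.rpow_zero]
    have := pow_le_pow_left₀ (norm_nonneg _) h2 2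
    linarith

lemma aux_rad (β L : ℝ) (h0 : 0 < β) (h1 : β < 1) (hL : 0 < L) :
    ∫⁻ r in Ioi (0:ℝ), ENNReal.ofReal r * ENNReal.ofReal (auxG β L (r^2))
      ≤ ENNReal.ofReal ((1 / (2 - 2*β) + 4 / (2*β)) * L ^ β) := by
  set R := 1 / √L with hR
  have hRp : 0 < R := by positivity
  have hR2 : R ^ 2 = L⁻¹ := by rw [hR, div_pow, Real.sq_sqrt hL.le]; simp
  have hRp' : ∀ a : ℝ, R ^ (2 * a) = L ^ (-a) := by
    intro a
    rw [Real.rpow_mul hRp.le, Real.rpow_two, hR2, Real.inv_rpow hL.le, Real.rpow_neg hL.le]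
  rw [← Ioc_union_Ioi_eq_Ioi hRp.le]
  refine (lintegral_union_le _ _ _).trans ?_
  rw [add_mul, ENNReal.ofReal_add (by have : 0 < 2 - 2 * β := by linarith
                                      positivity) (by positivity)]
  refine add_le_add ?_ ?_
  · have hint : IntegrableOn (fun r : ℝ => L * r ^ (1 - 2*β)) (Ioc 0 R) := by
      have := (intervalIntegral.intervalIntegrable_rpow' (a := 0) (b := R) (r := 1 - 2*β)
        (by linarith)).const_mul L
      rwa [intervalIntegrable_iff_integrableOn_Ioc_of_le hRp.le] at this
    calc _ = ∫⁻ r in Ioc 0 R, ENNReal.ofReal (L * r ^ (1 - 2*β)) := by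
            refine setLIntegral_congr_fun measurableSet_Ioc ?_
            intro r hr
            have hr0 : 0 < r := hr.1
            have : r ^ 2 ≤ 1 / L := by
              rw [one_div, ← hR2]; exact pow_le_pow_left₀ hr0.le hr.2 2
            simp only [auxG, if_pos this]
            rw [← ENNReal.ofReal_mul hr0.le]
            congr 1
            rw [← Real.rpow_two, ← Real.rpow_mul hr0.le, show 1 - 2 * β = 1 + 2 * -β by ring,
              Real.rpow_add hr0, Real.rpow_one]
            ring
      _ = ENNReal.ofReal (∫ r in Ioc 0 R, L * r ^ (1 - 2*β)) := by
            rw [ofReal_integral_eq_lintegral_ofReal hint]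
            filter_upwards [ae_restrict_mem measurableSet_Ioc] with r hr
            have hr0 : 0 < r := hr.1
            simp only [Pi.zero_apply]
            positivity
      _ ≤ _ := by
            apply ENNReal.ofReal_le_ofReal
            rw [← intervalIntegral.integral_of_le hRp.le, intervalIntegral.integral_const_mul,
              integral_rpow (Or.inl (by linarith)), Real.zero_rpow (by linarith),
              show 1 - 2*β + 1 = 2 * (1 - β) by ring, hRp', 
              show -(1-β) = β - 1 by ring, Real.rpow_sub_one hL.ne']
            apply le_of_eq
            have : 1 - β ≠ 0 := by linarith
            rw [show 2 - 2*β = 2 * (1 - β) by ring]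
            field_simp
            ring
  · have hint : IntegrableOn (fun r : ℝ => 4 * r ^ (-1 - 2*β)) (Ioi R) :=
      (integrableOn_Ioi_rpow_of_lt (by linarith) hRp).const_mul 4
    calc _ = ∫⁻ r in Ioi R, ENNReal.ofReal (4 * r ^ (-1 - 2*β)) := by
            refine setLIntegral_congr_fun measurableSet_Ioi ?_
            intro r hr
            have hr0 : 0 < r := hRp.trans hr
            have : ¬ r ^ 2 ≤ 1 / L := by
              rw [one_div, ← hR2, not_le]; exact pow_lt_pow_left₀ hr hRp.le two_ne_zero
            simp only [auxG, if_neg this]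
            rw [← ENNReal.ofReal_mul hr0.le]
            congr 1
            rw [← Real.rpow_two, ← Real.rpow_mul hr0.le,
              show -1 - 2 * β = 1 + 2 * -(1+β) by ring,
              Real.rpow_add hr0, Real.rpow_one]
            ring
      _ = ENNReal.ofReal (∫ r in Ioi R, 4 * r ^ (-1 - 2*β)) := by
            rw [ofReal_integral_eq_lintegral_ofReal hint]
            filter_upwards [ae_restrict_mem measurableSet_Ioi] with r hr
            have hr0 : 0 < r := hRp.trans hr
            simp only [Pi.zero_apply]
            positivity
      _ ≤ _ := by
            apply ENNReal.ofReal_le_ofReal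
            rw [integral_const_mul, integral_Ioi_rpow_of_lt (by linarith) hRp,
              show -1 - 2*β + 1 = 2 * (-β) by ring, hRp', neg_neg]
            apply le_of_eq
            field_simp

/-- Kernel bound for the Gagliardo fractional seminorm of order β of the non-oscillatory
component of the unified transform solution. -/
theorem fractional_seminorm_kernel_bound (β : ℝ) (hβ : β ∈ Set.Ioo (0:ℝ) 1) :
    ∃ C : ℝ, 0 < C ∧ ∀ (k₁ k₂ : ℝ), 0 < k₂ →
      (∫⁻ z₁ : ℝ, ∫⁻ z₂ in Ioi (0:ℝ),
          ENNReal.ofReal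
            (‖Complex.exp (Complex.I * (k₁:ℂ) * (z₁:ℂ) - (k₂:ℂ) * (z₂:ℂ)) - 1‖ ^ 2
              / (z₁^2 + z₂^2) ^ (1 + β)))
        ≤ ENNReal.ofReal (C * (k₁^2 + k₂^2) ^ β) := by
  obtain ⟨h0, h1⟩ := hβ
  have h2 : 0 < 2 - 2 * β := by linarith
  refine ⟨(1 / (2 - 2*β) + 4 / (2*β)) * (2 * Real.pi), by positivity, ?_⟩
  intro k₁ k₂ hk
  set L := k₁^2 + k₂^2 with hLd
  have hL : 0 < L := by positivity
  have hm := auxG_meas β L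
  calc _ ≤ ∫⁻ z₁ : ℝ, ∫⁻ z₂ : ℝ, ENNReal.ofReal (auxG β L (z₁^2+z₂^2)) := by
        refine lintegral_mono fun z₁ => ?_
        refine le_trans ?_ (setLIntegral_le_lintegral (Ioi 0) _)
        refine setLIntegral_mono' measurableSet_Ioi fun z₂ hz => ?_
        exact ENNReal.ofReal_le_ofReal (aux_pt β k₁ k₂ z₁ z₂ h0 hk hz)
    _ = ∫⁻ p : ℝ × ℝ, ENNReal.ofReal (auxG β L (p.1^2+p.2^2)) := by
        rw [Measure.volume_eq_prod, lintegral_prod]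
        fun_prop
    _ = ∫⁻ p in Ioi (0:ℝ) ×ˢ Ioo (-Real.pi) Real.pi,
          ENNReal.ofReal p.1 * ENNReal.ofReal (auxG β L (p.1^2)) := by
        rw [← lintegral_comp_polarCoord_symm, polarCoord_target]
        refine lintegral_congr fun p => ?_
        simp only [polarCoord_symm_apply, smul_eq_mul]
        congr 4
        linear_combination p.1^2 * Real.cos_sq_add_sin_sq p.2
    _ = (∫⁻ r in Ioi (0:ℝ), ENNReal.ofReal r * ENNReal.ofReal (auxG β L (r^2))) *
          ENNReal.ofReal (2 * Real.pi) := by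
        rw [Measure.volume_eq_prod, ← Measure.prod_restrict, lintegral_prod _ (by fun_prop)]
        simp only [lintegral_const, Measure.restrict_apply MeasurableSet.univ, univ_inter,
          Real.volume_Ioo]
        rw [lintegral_mul_const _ (by fun_prop)]
        congr 2
        ring
    _ ≤ _ := by
        refine (mul_le_mul_left (aux_rad β L h0 h1 hL) _).trans ?_
        rw [← ENNReal.ofReal_mul (by positivity)]
        apply le_of_eq
        congr 1
        ring
end

section
/- (Global relation for the forced linear Schrödinger equation on the half-plane.) Let T > 0. Suppose u, f : ℝ × [0,∞) × [0,T] → ℂ are such that: (i) for each t ∈ [0,T], the functions (x₁,x₂) ↦ u(x₁,x₂,t) and (x₁,x₂) ↦ f(x₁,x₂,t) are restrictions to ℝ × [0,∞) of Schwartz functions on ℝ²; (ii) u is continuously differentiable in t, with ∂ₜu, and all spatial derivatives of u up to second order, jointly continuous and dominated uniformly in t by an integrable function of (x₁,x₂); (iii) i ∂ₜu + ∂²_{x₁}u + ∂²_{x₂}u = f on ℝ × (0,∞) × (0,T). Define the half-plane Fourier transform û(k₁,k₂,t) = ∫_{x₁∈ℝ} ∫_{x₂=0}^∞ e^{-ik₁x₁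 - ik₂x₂} u(x₁,x₂,t) dx₂ dx₁, and similarly f̂; define the boundary transforms ĝ₀(k₁,t) = ∫_{ℝ} e^{-ik₁x₁} u(x₁,0,t) dx₁ and ĝ₁(k₁,t) = ∫_{ℝ} e^{-ik₁x₁} ∂_{x₂}u(x₁,0,t) dx₁. Then for every k₁ ∈ ℝ, every k₂ ∈ ℂ with Im(k₂) ≤ 0, and every t ∈ [0,T], e^{i(k₁²+k₂²)t} û(k₁,k₂,t) = û(k₁,k₂,0) + ∫₀^t e^{i(k₁²+k₂²)t'} [ k₂ ĝ₀(k₁,t') - i ĝ₁(k₁,t') - i f̂(k₁,k₂,t') ] dt'. -/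
open MeasureTheory Set Filter

namespace GlobRel

noncomputable def EE (k₁ : ℝ) (k₂ : ℂ) (x y : ℝ) : ℂ :=
  Complex.exp (-Complex.I * (k₁:ℂ) * (x:ℂ) - Complex.I * k₂ * (y:ℂ))

noncomputable def mu : Measure (ℝ × ℝ) := (volume : Measure ℝ).prod (volume.restrict (Ioi (0:ℝ)))

lemma mu_eq : mu = (volume : Measure (ℝ × ℝ)).restrict (univ ×ˢ Ioi (0:ℝ)) := by
  rw [Measure.volume_eq_prod, ← Measure.prod_restrict, Measure.restrict_univ, mu]

lemma EE_norm (k₁ : ℝ) (k₂ : ℂ) (hk : k₂.im ≤ 0) (x y : ℝ) (hy : 0 ≤ y) : ‖EE k₁ k₂ x y‖ ≤ 1 := by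
  rw [EE, Complex.norm_exp, Real.exp_le_one_iff]
  simp
  nlinarith

lemma EE_cont (k₁ : ℝ) (k₂ : ℂ) : Continuous (fun p : ℝ × ℝ => EE k₁ k₂ p.1 p.2) := by
  unfold EE; fun_prop

lemma ae_mu : ∀ᵐ p ∂mu, 0 < p.2 := by
  rw [mu_eq]
  filter_upwards [ae_restrict_mem (MeasurableSet.univ.prod measurableSet_Ioi)] with p hp
  exact hp.2

lemma int_EE_mul (k₁ : ℝ) (k₂ : ℂ) (hk : k₂.im ≤ 0) (g : ℝ × ℝ → ℂ) (hg : Integrable g mu) :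
    Integrable (fun p : ℝ × ℝ => EE k₁ k₂ p.1 p.2 * g p) mu := by
  refine hg.bdd_mul (c := 1) (EE_cont k₁ k₂).aestronglyMeasurable ?_
  filter_upwards [ae_mu] with p hp
  exact EE_norm k₁ k₂ hk _ _ hp.le

lemma schwartz_int (V : SchwartzMap (ℝ × ℝ) ℂ) : Integrable (fun p => V p) mu := by
  rw [mu_eq]
  exact (SchwartzMap.integrable (μ := volume) V).restrict

lemma schwartz_bd (V : SchwartzMap (ℝ × ℝ) ℂ) :
    ∃ C : ℝ, ∀ p, ‖V p‖ ≤ C * (1 + ‖p‖) ^ (-2 : ℝ) := by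
  refine ⟨2 ^ 2 * ((Finset.Iic ((2:ℕ), (0:ℕ))).sup
    fun m => SchwartzMap.seminorm ℝ m.1 m.2) V, fun p => ?_⟩
  have h := SchwartzMap.one_add_le_sup_seminorm_apply (𝕜 := ℝ) (m := (2, 0)) le_rfl le_rfl V p
  rw [norm_iteratedFDeriv_zero] at h
  have h1 : (0:ℝ) < 1 + ‖p‖ := by positivity
  rw [Real.rpow_neg h1.le, ← div_eq_mul_inv, le_div_iff₀ (by positivity)]
  have : (1 + ‖p‖) ^ (2:ℝ) = (1 + ‖p‖) ^ (2:ℕ) := by norm_cast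
  rw [this, mul_comm]
  exact h

lemma slice_int (V : SchwartzMap (ℝ × ℝ) ℂ) (j : ℝ → ℝ × ℝ) (hj : Continuous j)
    (hb : ∀ x, ‖x‖ ≤ ‖j x‖) : Integrable (fun x => V (j x)) := by
  obtain ⟨C, hC⟩ := schwartz_bd V
  have hC0 : 0 ≤ C := by
    have h0 := hC 0
    simp at h0
    exact (norm_nonneg _).trans h0
  have hi : Integrable (fun x : ℝ => C * (1 + ‖x‖) ^ (-2 : ℝ)) :=
    (integrable_one_add_norm (by simp)).const_mul C
  refine hi.mono' (V.continuous.comp hj).aestronglyMeasurable (ae_of_all _ fun x => ?_)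
  refine (hC _).trans ?_
  gcongr ?_ * ?_
  exact Real.rpow_le_rpow_of_nonpos (by positivity) (by linarith [hb x]) (by norm_num)

lemma slice_int1 (V : SchwartzMap (ℝ × ℝ) ℂ) (y : ℝ) : Integrable (fun x => V (x, y)) :=
  slice_int V (fun x => (x, y)) (by fun_prop) (fun x => by simp [Prod.norm_def])

lemma slice_int2 (V : SchwartzMap (ℝ × ℝ) ℂ) (x : ℝ) : Integrable (fun y => V (x, y)) :=
  slice_int V (fun y => (x, y)) (by fun_prop) (fun x => by simp [Prod.norm_def])

noncomputable def D1 (V : SchwartzMap (ℝ × ℝ) ℂ) : SchwartzMap (ℝ × ℝ) ℂ :=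
  LineDeriv.lineDerivOp ((1:ℝ), (0:ℝ)) V
noncomputable def D2 (V : SchwartzMap (ℝ × ℝ) ℂ) : SchwartzMap (ℝ × ℝ) ℂ :=
  LineDeriv.lineDerivOp ((0:ℝ), (1:ℝ)) V

lemma hasD1 (V : SchwartzMap (ℝ × ℝ) ℂ) (x y : ℝ) :
    HasDerivAt (fun s => V (s, y)) (D1 V (x, y)) x := by
  rw [D1, SchwartzMap.lineDerivOp_apply_eq_fderiv]
  exact (V.hasFDerivAt (x, y)).comp_hasDerivAt x ((hasDerivAt_id x).prodMk (hasDerivAt_const x y))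

lemma hasD2 (V : SchwartzMap (ℝ × ℝ) ℂ) (x y : ℝ) :
    HasDerivAt (fun s => V (x, s)) (D2 V (x, y)) y := by
  rw [D2, SchwartzMap.lineDerivOp_apply_eq_fderiv]
  exact (V.hasFDerivAt (x, y)).comp_hasDerivAt y ((hasDerivAt_const y x).prodMk (hasDerivAt_id y))

lemma hasEE1 (k₁ : ℝ) (k₂ : ℂ) (x y : ℝ) :
    HasDerivAt (fun s => EE k₁ k₂ s y) (EE k₁ k₂ x y * (-Complex.I * k₁)) x := by
  unfold EE
  have h := ((((hasDerivAt_id x).ofReal_comp).const_mul (-Complex.I * (k₁:ℂ))).sub_const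
    (Complex.I * k₂ * (y:ℂ))).cexp
  simpa using h

lemma hasEE2 (k₁ : ℝ) (k₂ : ℂ) (x y : ℝ) :
    HasDerivAt (fun s => EE k₁ k₂ x s) (EE k₁ k₂ x y * (-Complex.I * k₂)) y := by
  unfold EE
  have h := ((((hasDerivAt_id y).ofReal_comp).const_mul (Complex.I * k₂)).const_sub
    (-Complex.I * (k₁:ℂ) * (x:ℂ))).cexp
  simpa using h

noncomputable def H (k₁ : ℝ) (k₂ : ℂ) (g : ℝ → ℝ → ℂ) : ℂ :=
  ∫ x : ℝ, ∫ y in Ioi (0:ℝ), EE k₁ k₂ x y * g x y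

noncomputable def B (k₁ : ℝ) (g : ℝ → ℂ) : ℂ :=
  ∫ x : ℝ, Complex.exp (-Complex.I * (k₁:ℂ) * (x:ℂ)) * g x

lemma H_eq (k₁ : ℝ) (k₂ : ℂ) (hk : k₂.im ≤ 0) (g : ℝ → ℝ → ℂ)
    (hg : Integrable (fun p : ℝ × ℝ => g p.1 p.2) mu) :
    H k₁ k₂ g = ∫ p, EE k₁ k₂ p.1 p.2 * g p.1 p.2 ∂mu :=
  (integral_prod _ (int_EE_mul k₁ k₂ hk _ hg)).symm

lemma int_slice2 (k₁ : ℝ) (k₂ : ℂ) (hk : k₂.im ≤ 0) (V : SchwartzMap (ℝ × ℝ) ℂ) (x : ℝ) :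
    IntegrableOn (fun y => EE k₁ k₂ x y * V (x, y)) (Ioi 0) := by
  refine (slice_int2 V x).integrableOn.bdd_mul (c := 1)
    ((EE_cont k₁ k₂).comp (by fun_prop : Continuous fun y : ℝ => (x, y))).aestronglyMeasurable ?_
  filter_upwards [ae_restrict_mem measurableSet_Ioi] with y hy
  exact EE_norm k₁ k₂ hk _ _ (le_of_lt hy)

lemma int_slice1 (k₁ : ℝ) (k₂ : ℂ) (hk : k₂.im ≤ 0) (V : SchwartzMap (ℝ × ℝ) ℂ) (y : ℝ)
    (hy : 0 ≤ y) : Integrable (fun x => EE k₁ k₂ x y * V (x, y)) := by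
  refine (slice_int1 V y).bdd_mul (c := 1)
    ((EE_cont k₁ k₂).comp (by fun_prop : Continuous fun x : ℝ => (x, y))).aestronglyMeasurable ?_
  exact ae_of_all _ fun x => EE_norm k₁ k₂ hk _ _ hy

lemma H_D1 (k₁ : ℝ) (k₂ : ℂ) (hk : k₂.im ≤ 0) (V : SchwartzMap (ℝ × ℝ) ℂ) :
    H k₁ k₂ (fun x y => D1 V (x, y)) = Complex.I * k₁ * H k₁ k₂ (fun x y => V (x, y)) := by
  have s1 := integral_integral_swap (f := fun x y => EE k₁ k₂ x y * D1 V (x, y))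
    (int_EE_mul k₁ k₂ hk _ (schwartz_int (D1 V)))
  have s2 := integral_integral_swap (f := fun x y => EE k₁ k₂ x y * V (x, y))
    (int_EE_mul k₁ k₂ hk _ (schwartz_int V))
  unfold H
  rw [s1, s2, ← integral_const_mul]
  refine setIntegral_congr_fun measurableSet_Ioi fun y hy => ?_
  have hy' : (0:ℝ) ≤ y := le_of_lt hy
  have i1 := int_slice1 k₁ k₂ hk V y hy'
  have i2 := int_slice1 k₁ k₂ hk (D1 V) y hy'
  have hd : ∀ x, HasDerivAt (fun x => EE k₁ k₂ x y * V (x, y))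
      (EE k₁ k₂ x y * D1 V (x, y) - Complex.I * k₁ * (EE k₁ k₂ x y * V (x, y))) x := by
    intro x
    refine ((hasEE1 k₁ k₂ x y).mul (hasD1 V x y)).congr_deriv ?_
    ring
  have h0 := integral_eq_zero_of_hasDerivAt_of_integrable hd (i2.sub (i1.const_mul _)) i1
  rw [integral_sub i2 (i1.const_mul _), integral_const_mul, sub_eq_zero] at h0
  exact h0

lemma H_D2 (k₁ : ℝ) (k₂ : ℂ) (hk : k₂.im ≤ 0) (V : SchwartzMap (ℝ × ℝ) ℂ) :
    H k₁ k₂ (fun x y => D2 V (x, y)) = Complex.I * k₂ * H k₁ k₂ (fun x y => V (x, y))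
      - B k₁ (fun x => V (x, 0)) := by
  unfold H B
  have hin : ∀ x : ℝ, ∫ y in Ioi (0:ℝ), EE k₁ k₂ x y * D2 V (x, y)
      = Complex.I * k₂ * (∫ y in Ioi (0:ℝ), EE k₁ k₂ x y * V (x, y))
        - Complex.exp (-Complex.I * (k₁:ℂ) * (x:ℂ)) * V (x, 0) := by
    intro x
    have i1 := int_slice2 k₁ k₂ hk V x
    have i2 := int_slice2 k₁ k₂ hk (D2 V) x
    have hd : ∀ y, HasDerivAt (fun y => EE k₁ k₂ x y * V (x, y))
        (EE k₁ k₂ x y * D2 V (x, y) - Complex.I * k₂ * (EE k₁ k₂ x y * V (x, y))) y := by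
      intro y
      refine ((hasEE2 k₁ k₂ x y).mul (hasD2 V x y)).congr_deriv ?_
      ring
    have i3 := i2.sub (i1.const_mul (Complex.I * k₂))
    have h0 := integral_Ioi_of_hasDerivAt_of_tendsto' (a := 0) (fun y _ => hd y) i3
      (tendsto_zero_of_hasDerivAt_of_integrableOn_Ioi (a := 0) (fun y _ => hd y) i3 i1)
    rw [integral_sub i2 (i1.const_mul _), integral_const_mul] at h0
    have he : EE k₁ k₂ x 0 = Complex.exp (-Complex.I * (k₁:ℂ) * (x:ℂ)) := by simp [EE]
    rw [he] at h0
    linear_combination h0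
  simp_rw [hin]
  have j1 := (int_EE_mul k₁ k₂ hk _ (schwartz_int V)).integral_prod_left
  have j2 := int_slice1 k₁ k₂ hk V 0 le_rfl
  have he : ∀ x : ℝ, EE k₁ k₂ x 0 = Complex.exp (-Complex.I * (k₁:ℂ) * (x:ℂ)) := by simp [EE]
  simp_rw [he] at j2
  rw [integral_sub (j1.const_mul _) j2, integral_const_mul]

lemma H_congr (k₁ : ℝ) (k₂ : ℂ) {g h : ℝ → ℝ → ℂ} (e : ∀ x y, 0 < y → g x y = h x y) :
    H k₁ k₂ g = H k₁ k₂ h := by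
  unfold H
  congr 1
  funext x
  refine setIntegral_congr_fun measurableSet_Ioi fun y hy => ?_
  simp only [e x y hy]

/-- slice identity at a fixed time -/
lemma slice_identity (k₁ : ℝ) (k₂ : ℂ) (hk : k₂.im ≤ 0) (u f ut : ℝ → ℝ → ℂ)
    (U F : SchwartzMap (ℝ × ℝ) ℂ)
    (hUF : ∀ x₁ x₂ : ℝ, 0 ≤ x₂ → u x₁ x₂ = U (x₁, x₂) ∧ f x₁ x₂ = F (x₁, x₂))
    (hPDE : ∀ (x₁ x₂ : ℝ), 0 < x₂ →
      Complex.I * ut x₁ x₂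
        + deriv (fun y => deriv (fun y' => u y' x₂) y) x₁
        + deriv (fun y => deriv (fun y' => u x₁ y') y) x₂
        = f x₁ x₂) :
    Complex.I * ((k₁:ℂ)^2 + k₂^2) * H k₁ k₂ u + H k₁ k₂ ut =
      k₂ * B k₁ (fun x => u x 0)
        - Complex.I * B k₁ (fun x => derivWithin (fun y => u x y) (Ici 0) 0)
        - Complex.I * H k₁ k₂ f := by
  have hu : H k₁ k₂ u = H k₁ k₂ (fun x y => U (x, y)) :=
    H_congr k₁ k₂ fun x y hy => (hUF x y hy.le).1
  have hf : H k₁ k₂ f = H k₁ k₂ (fun x y => F (x, y)) :=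
    H_congr k₁ k₂ fun x y hy => (hUF x y hy.le).2
  have hb0 : (fun x => u x 0) = fun x => U (x, 0) := by
    funext x; exact (hUF x 0 le_rfl).1
  have hb1 : (fun x => derivWithin (fun y => u x y) (Ici 0) 0) = fun x => D2 U (x, 0) := by
    funext x
    rw [derivWithin_congr (f := fun y => U (x, y)) (f₁ := fun y => u x y) (s := Ici 0)
      (fun y hy => (hUF x y hy).1) (hUF x 0 le_rfl).1]
    exact (hasD2 U x 0).hasDerivWithinAt.derivWithin (uniqueDiffOn_Ici 0 0 self_mem_Ici)
  have hd1 : ∀ x y, 0 < y → deriv (fun s => deriv (fun s' => u s' y) s) x = D1 (D1 U) (x, y) := by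
    intro x y hy
    have e1 : (fun s' => u s' y) = fun s' => U (s', y) := by
      funext s; exact (hUF s y hy.le).1
    rw [e1]
    have e2 : (fun s => deriv (fun s' => U (s', y)) s) = fun s => D1 U (s, y) := by
      funext s; exact (hasD1 U s y).deriv
    rw [e2]
    exact (hasD1 (D1 U) x y).deriv
  have hd2 : ∀ x y, 0 < y → deriv (fun s => deriv (fun s' => u x s') s) y = D2 (D2 U) (x, y) := by
    intro x y hy
    have e2 : (fun s => deriv (fun s' => u x s') s) =ᶠ[nhds y] fun s => D2 U (x, s) := by
      filter_upwards [Ioi_mem_nhds hy] with s hs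
      have e1 : (fun s' => u x s') =ᶠ[nhds s] fun s' => U (x, s') := by
        filter_upwards [Ioi_mem_nhds hs] with s' hs'
        exact (hUF x s' (le_of_lt hs')).1
      rw [e1.deriv_eq]
      exact (hasD2 U x s).deriv
    rw [e2.deriv_eq]
    exact (hasD2 (D2 U) x y).deriv
  have hut : H k₁ k₂ ut = -Complex.I * (H k₁ k₂ (fun x y => F (x, y))
      - H k₁ k₂ (fun x y => D1 (D1 U) (x, y)) - H k₁ k₂ (fun x y => D2 (D2 U) (x, y))) := by
    rw [H_congr k₁ k₂ (g := ut) (h := fun x y =>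
      -Complex.I * (F (x, y) - D1 (D1 U) (x, y) - D2 (D2 U) (x, y)))]
    · have iF := schwartz_int F
      have i1 := schwartz_int (D1 (D1 U))
      have i2 := schwartz_int (D2 (D2 U))
      rw [H_eq k₁ k₂ hk (fun x y => F (x, y)) iF, H_eq k₁ k₂ hk (fun x y => D1 (D1 U) (x, y)) i1,
        H_eq k₁ k₂ hk (fun x y => D2 (D2 U) (x, y)) i2,
        H_eq k₁ k₂ hk _ (((iF.sub i1).sub i2).const_mul _)]
      have jF := int_EE_mul k₁ k₂ hk _ iF
      have j1 := int_EE_mul k₁ k₂ hk _ i1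
      have j2 := int_EE_mul k₁ k₂ hk _ i2
      have e := integral_sub (jF.sub j1) j2
      have e' := integral_sub jF j1
      simp only [Pi.sub_apply] at e
      rw [← e', ← e, ← integral_const_mul]
      congr 1
      funext p
      ring
    · intro x y hy
      have h := hPDE x y hy
      rw [hd1 x y hy, hd2 x y hy, (hUF x y hy.le).2] at h
      linear_combination (-Complex.I) * h + (ut x y) * Complex.I_sq
  rw [hut, hu, hf, hb0, hb1, H_D1 k₁ k₂ hk (D1 U), H_D1 k₁ k₂ hk U, H_D2 k₁ k₂ hk (D2 U),
    H_D2 k₁ k₂ hk U]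
  linear_combination (Complex.I * (k₁^2 + k₂^2) * H k₁ k₂ (fun x y => U (x, y))
    - k₂ * B k₁ (fun x => U (x, 0))) * Complex.I_sq

section reg
variable {T : ℝ} {g : ℝ → ℝ → ℝ → ℂ}

lemma reg_meas (hc : ContinuousOn (fun p : ℝ × ℝ × ℝ => g p.1 p.2.1 p.2.2)
          (Set.univ ×ˢ Ici (0:ℝ) ×ˢ Icc (0:ℝ) T)) {t : ℝ} (ht : t ∈ Icc (0:ℝ) T) :
    AEStronglyMeasurable (fun p : ℝ × ℝ => g p.1 p.2 t) mu := by
  rw [mu_eq]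
  refine ContinuousOn.aestronglyMeasurable ?_ (MeasurableSet.univ.prod measurableSet_Ioi)
  refine hc.comp (f := fun p : ℝ × ℝ => (p.1, p.2, t)) (by fun_prop) ?_
  intro p hp
  exact ⟨trivial, Ioi_subset_Ici_self hp.2, ht⟩

lemma dom_int {dom : ℝ × ℝ → ℝ} (hd : IntegrableOn dom (Set.univ ×ˢ Ici (0:ℝ))) :
    Integrable dom mu := by
  rw [mu_eq]
  exact hd.mono_set (prod_mono le_rfl Ioi_subset_Ici_self)

lemma reg_int (hc : ContinuousOn (fun p : ℝ × ℝ × ℝ => g p.1 p.2.1 p.2.2)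
          (Set.univ ×ˢ Ici (0:ℝ) ×ˢ Icc (0:ℝ) T))
    {dom : ℝ × ℝ → ℝ} (hd : IntegrableOn dom (Set.univ ×ˢ Ici (0:ℝ)))
    (hb : ∀ (x₁ x₂ : ℝ), 0 ≤ x₂ → ∀ t ∈ Icc (0:ℝ) T, ‖g x₁ x₂ t‖ ≤ dom (x₁, x₂))
    {t : ℝ} (ht : t ∈ Icc (0:ℝ) T) :
    Integrable (fun p : ℝ × ℝ => g p.1 p.2 t) mu := by
  refine (dom_int hd).mono' (reg_meas hc ht) ?_
  filter_upwards [ae_mu] with p hp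
  exact hb _ _ hp.le t ht

lemma EE_bd (k₁ : ℝ) (k₂ : ℂ) (hk : k₂.im ≤ 0) (x y : ℝ) (hy : 0 ≤ y) (z : ℂ) :
    ‖EE k₁ k₂ x y * z‖ ≤ ‖z‖ := by
  rw [norm_mul]
  exact mul_le_of_le_one_left (norm_nonneg _) (EE_norm k₁ k₂ hk x y hy)

lemma reg_cont (k₁ : ℝ) (k₂ : ℂ) (hk : k₂.im ≤ 0)
    (hc : ContinuousOn (fun p : ℝ × ℝ × ℝ => g p.1 p.2.1 p.2.2)
          (Set.univ ×ˢ Ici (0:ℝ) ×ˢ Icc (0:ℝ) T))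
    {dom : ℝ × ℝ → ℝ} (hd : IntegrableOn dom (Set.univ ×ˢ Ici (0:ℝ)))
    (hb : ∀ (x₁ x₂ : ℝ), 0 ≤ x₂ → ∀ t ∈ Icc (0:ℝ) T, ‖g x₁ x₂ t‖ ≤ dom (x₁, x₂)) :
    ContinuousOn (fun t => H k₁ k₂ (fun x y => g x y t)) (Icc 0 T) := by
  have h : ContinuousOn (fun t => ∫ p, EE k₁ k₂ p.1 p.2 * g p.1 p.2 t ∂mu) (Icc 0 T) := by
    refine continuousOn_of_dominated (bound := dom)
      (fun t ht => (int_EE_mul k₁ k₂ hk _ (reg_int hc hd hb ht)).aestronglyMeasurable) ?_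
      (dom_int hd) ?_
    · intro t ht
      filter_upwards [ae_mu] with p hp
      exact (EE_bd k₁ k₂ hk _ _ hp.le _).trans (hb _ _ hp.le t ht)
    · filter_upwards [ae_mu] with p hp
      refine continuousOn_const.mul ?_
      refine hc.comp (f := fun t : ℝ => (p.1, p.2, t)) (by fun_prop) ?_
      intro t ht
      exact ⟨trivial, hp.le, ht⟩
  exact h.congr fun t ht => H_eq k₁ k₂ hk _ (reg_int hc hd hb ht)

end reg

lemma reg_deriv (k₁ : ℝ) (k₂ : ℂ) (hk : k₂.im ≤ 0) {T : ℝ} {u ut : ℝ → ℝ → ℝ → ℂ}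
    (hut : ∀ (x₁ x₂ : ℝ), 0 ≤ x₂ → ∀ t ∈ Icc (0:ℝ) T,
      HasDerivAt (fun τ => u x₁ x₂ τ) (ut x₁ x₂ t) t)
    (hc : ContinuousOn (fun p : ℝ × ℝ × ℝ => u p.1 p.2.1 p.2.2)
          (Set.univ ×ˢ Ici (0:ℝ) ×ˢ Icc (0:ℝ) T))
    {dom : ℝ × ℝ → ℝ} (hd : IntegrableOn dom (Set.univ ×ˢ Ici (0:ℝ)))
    (hb : ∀ (x₁ x₂ : ℝ), 0 ≤ x₂ → ∀ t ∈ Icc (0:ℝ) T, ‖u x₁ x₂ t‖ ≤ dom (x₁, x₂))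
    (hc' : ContinuousOn (fun p : ℝ × ℝ × ℝ => ut p.1 p.2.1 p.2.2)
          (Set.univ ×ˢ Ici (0:ℝ) ×ˢ Icc (0:ℝ) T))
    {dom' : ℝ × ℝ → ℝ} (hd' : IntegrableOn dom' (Set.univ ×ˢ Ici (0:ℝ)))
    (hb' : ∀ (x₁ x₂ : ℝ), 0 ≤ x₂ → ∀ t ∈ Icc (0:ℝ) T, ‖ut x₁ x₂ t‖ ≤ dom' (x₁, x₂))
    {t : ℝ} (ht : t ∈ Ioo (0:ℝ) T) :
    HasDerivAt (fun t => H k₁ k₂ (fun x y => u x y t)) (H k₁ k₂ (fun x y => ut x y t)) t := by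
  have hn : Ioo (0:ℝ) T ∈ nhds t := Ioo_mem_nhds ht.1 ht.2
  have hI : ∀ {s : ℝ}, s ∈ Ioo (0:ℝ) T → s ∈ Icc (0:ℝ) T := fun h => Ioo_subset_Icc_self h
  have h := (hasDerivAt_integral_of_dominated_loc_of_deriv_le (μ := mu) (bound := dom')
    (F := fun t (p : ℝ × ℝ) => EE k₁ k₂ p.1 p.2 * u p.1 p.2 t)
    (F' := fun t (p : ℝ × ℝ) => EE k₁ k₂ p.1 p.2 * ut p.1 p.2 t) hn
    (by
      filter_upwards [hn] with s hs
      exact (int_EE_mul k₁ k₂ hk _ (reg_int hc hd hb (hI hs))).aestronglyMeasurable)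
    (int_EE_mul k₁ k₂ hk _ (reg_int hc hd hb (hI ht)))
    (int_EE_mul k₁ k₂ hk _ (reg_int hc' hd' hb' (hI ht))).aestronglyMeasurable
    (by
      filter_upwards [ae_mu] with p hp s hs
      exact (EE_bd k₁ k₂ hk _ _ hp.le _).trans (hb' _ _ hp.le s (hI hs)))
    (dom_int hd')
    (by
      filter_upwards [ae_mu] with p hp s hs
      exact (hut _ _ hp.le s (hI hs)).const_mul _)).2
  rw [H_eq k₁ k₂ hk _ (reg_int hc' hd' hb' (hI ht))]
  refine h.congr_of_eventuallyEq ?_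
  filter_upwards [hn] with s hs
  exact H_eq k₁ k₂ hk _ (reg_int hc hd hb (hI hs))

end GlobRel

/-- Global relation of the unified transform (Fokas) method for the forced linear
Schrödinger equation i∂ₜu + ∂²_{x₁}u + ∂²_{x₂}u = f on the half-plane ℝ × (0,∞),
valid for k₁ ∈ ℝ, Im(k₂) ≤ 0, and t ∈ [0,T]. -/
theorem global_relation_forced_linear_schrodinger (T : ℝ) (hT : 0 < T)
    (u f ut : ℝ → ℝ → ℝ → ℂ)
    -- (i) each time slice of u and f is the restriction to ℝ × [0,∞) of a Schwartz function
    (hSchwartz : ∀ t ∈ Icc (0:ℝ) T, ∃ U F : SchwartzMap (ℝ × ℝ) ℂ,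
      ∀ x₁ x₂ : ℝ, 0 ≤ x₂ → u x₁ x₂ t = U (x₁, x₂) ∧ f x₁ x₂ t = F (x₁, x₂))
    -- (ii) u is continuously differentiable in t with derivative ut
    (hut : ∀ (x₁ x₂ : ℝ), 0 ≤ x₂ → ∀ t ∈ Icc (0:ℝ) T,
      HasDerivAt (fun τ => u x₁ x₂ τ) (ut x₁ x₂ t) t)
    -- (ii) ∂ₜu and all spatial derivatives of u up to second order are jointly
    -- continuous and dominated, uniformly in t, by an integrable function of (x₁,x₂)
    (hreg : ∀ g ∈ [ut, u,
        fun x₁ x₂ t => deriv (fun y => u y x₂ t) x₁,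
        fun x₁ x₂ t => derivWithin (fun y => u x₁ y t) (Ici 0) x₂,
        fun x₁ x₂ t => deriv (fun y => deriv (fun y' => u y' x₂ t) y) x₁,
        fun x₁ x₂ t => derivWithin (fun y => derivWithin (fun y' => u x₁ y' t) (Ici 0) y)
          (Ici 0) x₂],
      ContinuousOn (fun p : ℝ × ℝ × ℝ => g p.1 p.2.1 p.2.2)
          (Set.univ ×ˢ Ici (0:ℝ) ×ˢ Icc (0:ℝ) T) ∧
        ∃ dom : ℝ × ℝ → ℝ, IntegrableOn dom (Set.univ ×ˢ Ici (0:ℝ)) ∧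
          ∀ (x₁ x₂ : ℝ), 0 ≤ x₂ → ∀ t ∈ Icc (0:ℝ) T, ‖g x₁ x₂ t‖ ≤ dom (x₁, x₂))
    -- (iii) the forced linear Schrödinger equation holds on ℝ × (0,∞) × (0,T)
    (hPDE : ∀ (x₁ x₂ : ℝ), 0 < x₂ → ∀ t ∈ Ioo (0:ℝ) T,
      Complex.I * ut x₁ x₂ t
        + deriv (fun y => deriv (fun y' => u y' x₂ t) y) x₁
        + deriv (fun y => deriv (fun y' => u x₁ y' t) y) x₂
        = f x₁ x₂ t) :
    -- the global relation
    ∀ (k₁ : ℝ) (k₂ : ℂ), k₂.im ≤ 0 → ∀ t ∈ Icc (0:ℝ) T,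
      Complex.exp (Complex.I * ((k₁:ℂ)^2 + k₂^2) * (t:ℂ))
          * (∫ x₁ : ℝ, ∫ x₂ in Ioi (0:ℝ),
              Complex.exp (-Complex.I * (k₁:ℂ) * (x₁:ℂ) - Complex.I * k₂ * (x₂:ℂ))
                * u x₁ x₂ t)
        = (∫ x₁ : ℝ, ∫ x₂ in Ioi (0:ℝ),
              Complex.exp (-Complex.I * (k₁:ℂ) * (x₁:ℂ) - Complex.I * k₂ * (x₂:ℂ))
                * u x₁ x₂ 0)
          + ∫ t' in (0:ℝ)..t,
              Complex.exp (Complex.I * ((k₁:ℂ)^2 + k₂^2) * (t':ℂ))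
                * (k₂ * (∫ x₁ : ℝ, Complex.exp (-Complex.I * (k₁:ℂ) * (x₁:ℂ)) * u x₁ 0 t')
                  - Complex.I * (∫ x₁ : ℝ, Complex.exp (-Complex.I * (k₁:ℂ) * (x₁:ℂ))
                      * derivWithin (fun y => u x₁ y t') (Ici 0) 0)
                  - Complex.I * (∫ x₁ : ℝ, ∫ x₂ in Ioi (0:ℝ),
                      Complex.exp (-Complex.I * (k₁:ℂ) * (x₁:ℂ) - Complex.I * k₂ * (x₂:ℂ))
                        * f x₁ x₂ t')) := by
  intro k₁ k₂ hk t ht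
  obtain ⟨hc', dom', hd', hb'⟩ := hreg ut (by simp)
  obtain ⟨hc, dom, hd, hb⟩ := hreg u (by simp)
  have cu := GlobRel.reg_cont k₁ k₂ hk hc hd hb
  have cut := GlobRel.reg_cont k₁ k₂ hk hc' hd' hb'
  have hsub : Icc (0:ℝ) t ⊆ Icc 0 T := Icc_subset_Icc_right ht.2
  set w : ℂ := Complex.I * ((k₁:ℂ)^2 + k₂^2) with hw
  have hexp : ∀ s : ℝ, HasDerivAt (fun s : ℝ => Complex.exp (w * (s:ℂ)))
      (Complex.exp (w * (s:ℂ)) * w) s := by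
    intro s
    have h := (((hasDerivAt_id s).ofReal_comp).const_mul w).cexp
    simpa using h
  have hexpc : Continuous (fun s : ℝ => Complex.exp (w * (s:ℂ))) := by fun_prop
  have hFTC := intervalIntegral.integral_eq_sub_of_hasDerivAt_of_le ht.1
    (f := fun s : ℝ => Complex.exp (w * (s:ℂ)) * GlobRel.H k₁ k₂ (fun x y => u x y s))
    (f' := fun s : ℝ => Complex.exp (w * (s:ℂ)) * (w * GlobRel.H k₁ k₂ (fun x y => u x y s)
      + GlobRel.H k₁ k₂ (fun x y => ut x y s)))
    (hexpc.continuousOn.mul (cu.mono hsub))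
    (fun s hs => by
      refine ((hexp s).mul (GlobRel.reg_deriv k₁ k₂ hk hut hc hd hb hc' hd' hb'
        ⟨hs.1, hs.2.trans_le ht.2⟩)).congr_deriv ?_
      ring)
    (by
      refine ContinuousOn.intervalIntegrable ?_
      rw [uIcc_of_le ht.1]
      exact hexpc.continuousOn.mul
        ((continuousOn_const.mul (cu.mono hsub)).add (cut.mono hsub)))
  have hcongr := intervalIntegral.integral_congr_Ioo_of_le (μ := volume) ht.1
    (f := fun s : ℝ => Complex.exp (w * (s:ℂ)) * (w * GlobRel.H k₁ k₂ (fun x y => u x y s)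
      + GlobRel.H k₁ k₂ (fun x y => ut x y s)))
    (g := fun s : ℝ => Complex.exp (w * (s:ℂ)) * (k₂ * GlobRel.B k₁ (fun x => u x 0 s)
        - Complex.I * GlobRel.B k₁ (fun x => derivWithin (fun y => u x y s) (Ici 0) 0)
        - Complex.I * GlobRel.H k₁ k₂ (fun x y => f x y s)))
    (fun s hs => by
      have hsT : s ∈ Ioo (0:ℝ) T := ⟨hs.1, hs.2.trans_le ht.2⟩
      obtain ⟨U, F, hUF⟩ := hSchwartz s (Ioo_subset_Icc_self hsT)
      have h := GlobRel.slice_identity k₁ k₂ hk (fun x y => u x y s) (fun x y => f x y s)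
        (fun x y => ut x y s) U F hUF (fun x y hy => hPDE x y hy s hsT)
      simp only [hw]
      rw [h])
  rw [hcongr] at hFTC
  simp only [Complex.ofReal_zero, mul_zero, Complex.exp_zero, one_mul] at hFTC
  exact (eq_add_of_sub_eq' hFTC.symm)
end
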